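/- Let SU(2) act on V = sl₂(ℂ) ⊕ ℂ² by g·(A, v) = (gAg⁻¹, gv), where sl₂(ℂ) is the space of traceless complex 2×2 matrices. Then the real vector space of SU(2)-invariant quadratic forms on V (viewed as a real vector space of dimension 10) has dimension exactly 4. -/

import Mathlib

/-!
Statement 9: The real vector space of SU(2)-invariant quadratic forms on
`V = sl₂(ℂ) ⊕ ℂ²` (real dimension 10), with action `g·(A,v) = (gAg⁻¹, gv)`, has dimension
exactly 4.  Here `sl₂(ℂ)` is identified with `ℂ³` via the linear coordinates
`c ↦ !![c 0, c 1; c 2, -c 0]` on the traceless complex 2×2 matrices.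
-/

namespace Stmt9

/-- `V ≅ sl₂(ℂ) ⊕ ℂ²` in coordinates: `ℂ³` parametrizes the traceless matrices. -/
abbrev V : Type := (Fin 3 → ℂ) × (Fin 2 → ℂ)

/-- The traceless complex 2×2 matrix with coordinates `c`. -/
def mat (c : Fin 3 → ℂ) : Matrix (Fin 2) (Fin 2) ℂ :=
  !![c 0, c 1; c 2, -(c 0)]

/-- A quadratic form `q` on (the underlying 10-dimensional real vector space of)
`V = sl₂(ℂ) ⊕ ℂ²` is SU(2)-invariant if `q(gAg⁻¹, gv) = q(A,v)` for all
`g ∈ SU(2)` (unitary of determinant 1). -/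
def IsInvariant (q : QuadraticForm ℝ V) : Prop :=
  ∀ g : Matrix (Fin 2) (Fin 2) ℂ, g ∈ Matrix.unitaryGroup (Fin 2) ℂ → g.det = 1 →
    ∀ x y : V, mat y.1 = g * mat x.1 * g⁻¹ → y.2 = g.mulVec x.2 → q y = q x

/-- The submodule of SU(2)-invariant quadratic forms on `V`. -/
noncomputable def invQF : Submodule ℝ (QuadraticForm ℝ V) where
  carrier := {q | IsInvariant q}
  add_mem' := by
    intro q r hq hr g hg hdet x y h1 h2
    simp only [QuadraticMap.add_apply, hq g hg hdet x y h1 h2, hr g hg hdet x y h1 h2]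
  zero_mem' := by
    intro g hg hdet x y _ _
    simp only [QuadraticMap.zero_apply]
  smul_mem' := by
    intro c q hq g hg hdet x y h1 h2
    simp only [QuadraticMap.smul_apply, hq g hg hdet x y h1 h2]


open ComplexConjugate

/-- The explicit element of SU(2) with first column `(a, b)`. -/
noncomputable def gm (a b : ℂ) : Matrix (Fin 2) (Fin 2) ℂ := !![a, -conj b; b, conj a]

lemma gm_inv (a b : ℂ) (h : a * conj a + b * conj b = 1) :
    (gm a b)⁻¹ = !![conj a, conj b; -b, a] := by
  apply Matrix.inv_eq_right_inv
  ext i j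
  fin_cases i <;> fin_cases j <;> simp [gm, Matrix.mul_apply, Fin.sum_univ_two] <;>
    first | ring1 | linear_combination h

lemma gm_mem (a b : ℂ) (h : a * conj a + b * conj b = 1) :
    gm a b ∈ Matrix.unitaryGroup (Fin 2) ℂ := by
  rw [Matrix.mem_unitaryGroup_iff]
  ext i j
  fin_cases i <;> fin_cases j <;>
    simp [gm, Matrix.mul_apply, Fin.sum_univ_two, Matrix.star_apply] <;>
    first | ring1 | linear_combination h

lemma gm_det (a b : ℂ) (h : a * conj a + b * conj b = 1) : (gm a b).det = 1 := by
  simp [gm, Matrix.det_fin_two]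
  linear_combination h

/-- Coordinates of the action on the traceless part. -/
noncomputable def act (a b : ℂ) (c : Fin 3 → ℂ) : Fin 3 → ℂ :=
  ![(a * c 0 - conj b * c 2) * conj a - b * (a * c 1 + conj b * c 0),
    (a * c 0 - conj b * c 2) * conj b + a * (a * c 1 + conj b * c 0),
    (b * c 0 + conj a * c 2) * conj a - b * (b * c 1 - conj a * c 0)]

/-- Coordinates of the action on the vector part. -/
noncomputable def actv (a b : ℂ) (v : Fin 2 → ℂ) : Fin 2 → ℂ :=
  ![a * v 0 - conj b * v 1, b * v 0 + conj a * v 1]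

lemma mat_act (a b : ℂ) (h : a * conj a + b * conj b = 1) (c : Fin 3 → ℂ) :
    mat (act a b c) = gm a b * mat c * (gm a b)⁻¹ := by
  rw [gm_inv a b h]
  ext i j
  fin_cases i <;> fin_cases j <;>
    simp [gm, mat, act, Matrix.mul_apply, Fin.sum_univ_two] <;> ring

lemma gm_mulVec (a b : ℂ) (v : Fin 2 → ℂ) : (gm a b).mulVec v = actv a b v := by
  ext i
  fin_cases i <;> simp [gm, actv, Matrix.mulVec, dotProduct, Fin.sum_univ_two] <;> ring

lemma mat_inj {c d : Fin 3 → ℂ} (h : mat c = mat d) : c = d := by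
  have h0 := congrFun (congrFun h 0) 0
  have h1 := congrFun (congrFun h 0) 1
  have h2 := congrFun (congrFun h 1) 0
  simp [mat] at h0 h1 h2
  ext i
  fin_cases i <;> simp [h0, h1, h2]

lemma exists_gm (g : Matrix (Fin 2) (Fin 2) ℂ) (hg : g ∈ Matrix.unitaryGroup (Fin 2) ℂ)
    (hd : g.det = 1) : ∃ a b, a * conj a + b * conj b = 1 ∧ g = gm a b := by
  have h1 : g * star g = 1 := Matrix.mem_unitaryGroup_iff.1 hg
  have h2 : g.adjugate * g = 1 := by rw [Matrix.adjugate_mul, hd, one_smul]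
  have h3 : g.adjugate = star g := left_inv_eq_right_inv h2 h1
  have e0 := congrFun (congrFun h3 0) 0
  have e1 := congrFun (congrFun h3 0) 1
  simp [Matrix.adjugate_fin_two, Matrix.star_apply] at e0 e1
  have e2 : g 0 1 = - conj (g 1 0) := by rw [← e1]; simp
  refine ⟨g 0 0, g 1 0, ?_, ?_⟩
  · rw [Matrix.det_fin_two, e0, e2] at hd
    linear_combination hd
  · ext i j
    fin_cases i <;> fin_cases j <;> simp [gm, e0, e2]

lemma isInvariant_iff (q : QuadraticForm ℝ V) : IsInvariant q ↔
    ∀ a b, a * conj a + b * conj b = 1 → ∀ c v, q (act a b c, actv a b v) = q (c, v) := by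
  constructor
  · intro hq a b h c v
    exact hq (gm a b) (gm_mem a b h) (gm_det a b h) _ _ (mat_act a b h c) (gm_mulVec a b v).symm
  · rintro hq g hg hd ⟨c, v⟩ ⟨c', v'⟩ h1 h2
    obtain ⟨a, b, h, rfl⟩ := exists_gm g hg hd
    rw [← hq a b h c v]
    simp only at h1 h2
    rw [← mat_act a b h] at h1
    rw [mat_inj h1, h2, gm_mulVec]

/-- Real parts of the coordinates. -/
noncomputable def rc (i : Fin 3) : V →ₗ[ℝ] ℝ :=
  Complex.reLm ∘ₗ LinearMap.proj i ∘ₗ LinearMap.fst ℝ (Fin 3 → ℂ) (Fin 2 → ℂ)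
/-- Imaginary parts of the coordinates. -/
noncomputable def ic (i : Fin 3) : V →ₗ[ℝ] ℝ :=
  Complex.imLm ∘ₗ LinearMap.proj i ∘ₗ LinearMap.fst ℝ (Fin 3 → ℂ) (Fin 2 → ℂ)
/-- Real parts of the vector coordinates. -/
noncomputable def rv (i : Fin 2) : V →ₗ[ℝ] ℝ :=
  Complex.reLm ∘ₗ LinearMap.proj i ∘ₗ LinearMap.snd ℝ (Fin 3 → ℂ) (Fin 2 → ℂ)
/-- Imaginary parts of the vector coordinates. -/
noncomputable def iv (i : Fin 2) : V →ₗ[ℝ] ℝ :=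
  Complex.imLm ∘ₗ LinearMap.proj i ∘ₗ LinearMap.snd ℝ (Fin 3 → ℂ) (Fin 2 → ℂ)

open QuadraticMap

/-- The square norm of the traceless part. -/
noncomputable def qN : QuadraticForm ℝ V :=
  (2 : ℝ) • (linMulLin (rc 0) (rc 0) + linMulLin (ic 0) (ic 0)) +
    (linMulLin (rc 1) (rc 1) + linMulLin (ic 1) (ic 1)) +
    (linMulLin (rc 2) (rc 2) + linMulLin (ic 2) (ic 2))
/-- The real part of minus the determinant. -/
noncomputable def qR : QuadraticForm ℝ V :=
  linMulLin (rc 0) (rc 0) - linMulLin (ic 0) (ic 0) +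
    (linMulLin (rc 1) (rc 2) - linMulLin (ic 1) (ic 2))
/-- The imaginary part of minus the determinant. -/
noncomputable def qI : QuadraticForm ℝ V :=
  (2 : ℝ) • linMulLin (rc 0) (ic 0) + (linMulLin (rc 1) (ic 2) + linMulLin (ic 1) (rc 2))
/-- The square norm of the vector part. -/
noncomputable def qM : QuadraticForm ℝ V :=
  (linMulLin (rv 0) (rv 0) + linMulLin (iv 0) (iv 0)) +
    (linMulLin (rv 1) (rv 1) + linMulLin (iv 1) (iv 1))

lemma qN_apply (c v) : ((qN (c, v) : ℝ) : ℂ) =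
    2 * (c 0 * conj (c 0)) + c 1 * conj (c 1) + c 2 * conj (c 2) := by
  simp only [Complex.mul_conj, Complex.normSq_apply]
  simp [qN, rc, ic]
  ring

lemma qM_apply (c v) : ((qM (c, v) : ℝ) : ℂ) = v 0 * conj (v 0) + v 1 * conj (v 1) := by
  simp only [Complex.mul_conj, Complex.normSq_apply]
  simp [qM, rv, iv]

lemma qR_apply (c v) : qR (c, v) = (c 0 * c 0 + c 1 * c 2).re := by
  simp [qR, rc, ic]

lemma qI_apply (c v) : qI (c, v) = (c 0 * c 0 + c 1 * c 2).im := by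
  simp [qI, rc, ic]; ring

lemma det_act (a b : ℂ) (h : a * conj a + b * conj b = 1) (c : Fin 3 → ℂ) :
    act a b c 0 * act a b c 0 + act a b c 1 * act a b c 2 = c 0 * c 0 + c 1 * c 2 := by
  simp [act]
  linear_combination
    (c 0 * c 0 + c 1 * c 2) * (a * conj a + b * conj b + 1) * h

lemma qN_inv : qN ∈ invQF := by
  refine (isInvariant_iff _).2 fun a b h c v => ?_
  rw [← Complex.ofReal_inj, qN_apply, qN_apply]
  simp [act]
  linear_combination (2 * (c 0 * conj (c 0)) + c 1 * conj (c 1) + c 2 * conj (c 2)) *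
    (a * conj a + b * conj b + 1) * h

lemma qM_inv : qM ∈ invQF := by
  refine (isInvariant_iff _).2 fun a b h c v => ?_
  rw [← Complex.ofReal_inj, qM_apply, qM_apply]
  simp [actv]
  linear_combination (v 0 * conj (v 0) + v 1 * conj (v 1)) * h

lemma qR_inv : qR ∈ invQF := by
  refine (isInvariant_iff _).2 fun a b h c v => ?_
  rw [qR_apply, qR_apply, det_act a b h]

lemma qI_inv : qI ∈ invQF := by
  refine (isInvariant_iff _).2 fun a b h c v => ?_
  rw [qI_apply, qI_apply, det_act a b h]

/-- Evaluation at four points. -/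
noncomputable def ev : invQF →ₗ[ℝ] (Fin 4 → ℝ) where
  toFun q := ![q.1 (![1, 0, 0], 0), q.1 (![Complex.I, 0, 0], 0),
    q.1 (![1 + Complex.I, 0, 0], 0), q.1 (0, ![1, 0])]
  map_add' p q := by ext i; fin_cases i <;> simp
  map_smul' r q := by ext i; fin_cases i <;> simp

lemma ev_surj : Function.Surjective ev := by
  intro f
  let s := (f 0 + f 1) / 4
  let t := (f 0 - f 1) / 2
  let u := (f 2 - 4 * s) / 2
  refine ⟨s • ⟨qN, qN_inv⟩ + t • ⟨qR, qR_inv⟩ + u • ⟨qI, qI_inv⟩ + f 3 • ⟨qM, qM_inv⟩, ?_⟩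
  ext i
  fin_cases i <;> simp [ev, qN, qR, qI, qM, rc, ic, rv, iv, s, t, u] <;> ring

lemma add_of_sub (q : QuadraticForm ℝ V) (x y : V) (h : q (x - y) = q (x + y)) :
    q (x + y) = q x + q y := by
  have h1 := QuadraticMap.map_add q x y
  have h2 := QuadraticMap.map_add q x (-y)
  rw [QuadraticMap.polar_neg_right, QuadraticMap.map_neg, ← sub_eq_add_neg] at h2
  linarith

lemma sqrt_half : ∃ r : ℝ, (r : ℂ) * (r : ℂ) = 1 / 2 := by
  refine ⟨Real.sqrt (1 / 2), ?_⟩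
  rw [← Complex.ofReal_mul, Real.mul_self_sqrt (by norm_num)]; norm_num

lemma inv_zero (q : QuadraticForm ℝ V) (hq : IsInvariant q)
    (h0 : q (![1, 0, 0], 0) = 0) (h1 : q (![Complex.I, 0, 0], 0) = 0)
    (h2 : q (![1 + Complex.I, 0, 0], 0) = 0) (h3 : q (0, ![1, 0]) = 0) : q = 0 := by
  rw [isInvariant_iff] at hq
  obtain ⟨r, hr2⟩ := sqrt_half
  -- the traceless part, diagonal
  have hz : ∀ z : ℂ, q (![z, 0, 0], 0) = 0 := by
    intro z
    have e : ((![z, 0, 0], 0) : V) =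
        z.re • ((![1, 0, 0], 0) : V) + z.im • ((![Complex.I, 0, 0], 0) : V) := by
      ext i <;> fin_cases i <;> simp
    have e' : ((![1 + Complex.I, 0, 0], 0) : V) =
        ((![1, 0, 0], 0) : V) + ((![Complex.I, 0, 0], 0) : V) := by
      ext i <;> fin_cases i <;> simp
    rw [e', QuadraticMap.map_add q, h0, h1] at h2
    rw [e, QuadraticMap.map_add q, QuadraticMap.map_smul, QuadraticMap.map_smul,
      QuadraticMap.polar_smul_left, QuadraticMap.polar_smul_right, h0, h1]
    simp at h2
    simp [h2]
  have hp : ∀ z : ℂ, q (![0, z, z], 0) = 0 := by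
    intro z
    have := hq r r
      (by rw [Complex.conj_ofReal, hr2]; norm_num) ![z, 0, 0] 0
    rw [hz] at this
    rw [← this]
    congr 2
    · ext i
      fin_cases i <;> simp only [act, Complex.conj_ofReal] <;> simp
      · ring
      · linear_combination (-2 * z) * hr2
      · linear_combination (-2 * z) * hr2
    · ext i
      fin_cases i <;> simp [actv]
  have hm : ∀ z : ℂ, q (![0, z, -z], 0) = 0 := by
    intro z
    have := hq (Complex.I * r) r
      (by
        rw [map_mul, Complex.conj_ofReal, Complex.conj_I]
        linear_combination (1 - Complex.I ^ 2) * hr2 - 1 / 2 * Complex.I_sq)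
      ![-Complex.I * z, 0, 0] 0
    rw [hz] at this
    rw [← this]
    congr 2
    · ext i
      fin_cases i <;> simp only [act, map_mul, Complex.conj_I, Complex.conj_ofReal] <;>
        simp
      · linear_combination -(Complex.I * z * (r : ℂ) ^ 2) * Complex.I_sq
      · linear_combination (2 * z * Complex.I ^ 2) * hr2 + z * Complex.I_sq
      · linear_combination (-2 * z * Complex.I ^ 2) * hr2 - z * Complex.I_sq
    · ext i
      fin_cases i <;> simp [actv]
  have hoff : ∀ z w : ℂ, q (![0, z, w], 0) = 0 := by
    intro z w
    have e : ((![0, z, w], 0) : V) =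
        (![0, (z + w) / 2, (z + w) / 2], 0) + (![0, (z - w) / 2, -((z - w) / 2)], 0) := by
      ext i <;> fin_cases i <;> simp <;> ring
    rw [e, add_of_sub, hp, hm, add_zero]
    rw [← e]
    have := hq 0 1 (by simp) ![0, z, w] 0
    rw [← this, ← QuadraticMap.map_neg]
    congr 1
    ext i <;> fin_cases i <;> simp [act, actv] <;> ring
  have hA : ∀ c : Fin 3 → ℂ, q (c, 0) = 0 := by
    intro c
    have e : ((c, 0) : V) = (![c 0, 0, 0], 0) + (![0, c 1, c 2], 0) := by
      ext i <;> fin_cases i <;> simp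
    rw [e, add_of_sub, hz, hoff, add_zero]
    rw [← e]
    have := hq Complex.I 0 (by simp) c 0
    rw [← this]
    congr 1
    ext i <;> fin_cases i <;> simp [act, actv] <;>
      first | linear_combination (c 0) * Complex.I_sq | linear_combination (-c 1) * Complex.I_sq | linear_combination (-c 2) * Complex.I_sq
  have hv : ∀ v : Fin 2 → ℂ, q (0, v) = 0 := by
    intro v
    set n : ℝ := Complex.normSq (v 0) + Complex.normSq (v 1) with hn
    have n0 : 0 ≤ n := add_nonneg (Complex.normSq_nonneg _) (Complex.normSq_nonneg _)
    rcases n0.eq_or_lt with hz | hpos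
    · have a0 := Complex.normSq_nonneg (v 0)
      have a1 := Complex.normSq_nonneg (v 1)
      have b0 : v 0 = 0 := Complex.normSq_eq_zero.1 (by linarith)
      have b1 : v 1 = 0 := Complex.normSq_eq_zero.1 (by linarith)
      have : ((0, v) : V) = 0 := by ext i <;> fin_cases i <;> simp [b0, b1]
      rw [this, QuadraticMap.map_zero]
    · have hr : Real.sqrt n ≠ 0 := (Real.sqrt_pos.2 hpos).ne'
      have hrc : ((Real.sqrt n : ℝ) : ℂ) ≠ 0 := by exact_mod_cast hr
      have hrr : ((Real.sqrt n : ℝ) : ℂ) * ((Real.sqrt n : ℝ) : ℂ) =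
          v 0 * conj (v 0) + v 1 * conj (v 1) := by
        rw [← Complex.ofReal_mul, Real.mul_self_sqrt n0, hn, Complex.mul_conj, Complex.mul_conj,
          Complex.ofReal_add]
      have := hq (v 0 / (Real.sqrt n : ℝ)) (v 1 / (Real.sqrt n : ℝ))
        (by
          rw [map_div₀, map_div₀, Complex.conj_ofReal]
          field_simp
          linear_combination -hrr) 0 ![1, 0]
      rw [h3] at this
      have e : ((0, v) : V) = Real.sqrt n • ((act (v 0 / (Real.sqrt n : ℝ))
          (v 1 / (Real.sqrt n : ℝ)) 0, actv (v 0 / (Real.sqrt n : ℝ))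
          (v 1 / (Real.sqrt n : ℝ)) ![1, 0]) : V) := by
        ext i <;> fin_cases i <;> simp [act, actv] <;> field_simp
      rw [e, QuadraticMap.map_smul, this, smul_zero]
  ext ⟨c, v⟩
  have e : ((c, v) : V) = (c, 0) + (0, v) := by simp
  rw [e, add_of_sub, hA, hv]
  · simp
  · rw [← e]
    have := hq (-1) 0 (by simp) c v
    rw [← this]
    congr 1
    ext i <;> fin_cases i <;> simp [act, actv]

lemma ev_inj : Function.Injective ev := by
  rw [injective_iff_map_eq_zero]
  rintro ⟨q, hq⟩ h
  have h0 := congrFun h 0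
  have h1 := congrFun h 1
  have h2 := congrFun h 2
  have h3 := congrFun h 3
  simp [ev] at h0 h1 h2 h3
  exact Subtype.ext (inv_zero q hq h0 h1 h2 h3)

/-- The space of SU(2)-invariant quadratic forms on `sl₂(ℂ) ⊕ ℂ²` has dimension exactly 4. -/
theorem dim_invariant_quadratic_forms_eq_four :
    Module.finrank ℝ ↥invQF = 4 := by
  rw [(LinearEquiv.ofBijective ev ⟨ev_inj, ev_surj⟩).finrank_eq]
  simp

end Stmt9
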